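/- arXiv:1905.12034 — 2 statements merged into one kernel-verified Lean document; each statement's English description precedes it below -/
import Mathlib

section
/- Let N be a positive natural number, let b, π, q, I : Fin N → ℝ with b n > 0 for all n, and with π, q, I probability vectors having strictly positive entries. Then Real.log (∑ n, b n * π n) ≥ (∑ n, q n * (Real.log (b n) + Real.log (π n))) + (∑ n, q n * Real.log (I n)) - 2 * ∑ n, q n * Real.log (q n). (This is inequality Eq. (13) in the proof of Lemma 3.3, obtained by combining the Jensen/ELBO bound with the Gibbs inequality.) -/
/-! The two terms `-∑ n, q n * log (q n)` are used separately: one completes the evidence lower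
bound for `log (∑ n, b n * π n)`, and the other makes `∑ n, q n * log (I n / q n)`, which is
nonpositive by the Gibbs inequality. Both are instances of Jensen's inequality for the concave
function `log`. -/

/-- Jensen's inequality for `log`, applied to the values `a n / q n` with weights `q n`. It yields
the evidence lower bound for `a n = b n * π n`, and the Gibbs inequality when `∑ n, a n = 1`. -/
theorem sum_mul_log_sub_le_log_sum {N : ℕ} (a q : Fin N → ℝ) (ha : ∀ n, 0 < a n)
    (hq : ∀ n, 0 < q n) (hqsum : ∑ n, q n = 1) :
    ∑ n, q n * Real.log (a n) - ∑ n, q n * Real.log (q n) ≤ Real.log (∑ n, a n) := by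
  have h := strictConcaveOn_log_Ioi.concaveOn.le_map_sum (t := Finset.univ) (w := q)
    (p := fun n => a n / q n) (fun n _ => (hq n).le) hqsum
    (fun n _ => div_pos (ha n) (hq n))
  have hmul : ∀ n, q n * (a n / q n) = a n := fun n => mul_div_cancel₀ (a n) (hq n).ne'
  have hlog : ∀ n, Real.log (a n / q n) = Real.log (a n) - Real.log (q n) :=
    fun n => Real.log_div (ha n).ne' (hq n).ne'
  simpa only [smul_eq_mul, hmul, hlog, mul_sub, Finset.sum_sub_distrib] using h

theorem elbo_with_importance (N : ℕ) (hN : 0 < N) (b π q I : Fin N → ℝ)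
    (hb : ∀ n, b n > 0)
    (hπ : ∀ n, π n > 0) (hπsum : ∑ n, π n = 1)
    (hq : ∀ n, q n > 0) (hqsum : ∑ n, q n = 1)
    (hI : ∀ n, I n > 0) (hIsum : ∑ n, I n = 1) :
    Real.log (∑ n, b n * π n) ≥
      (∑ n, q n * (Real.log (b n) + Real.log (π n))) +
        (∑ n, q n * Real.log (I n)) - 2 * ∑ n, q n * Real.log (q n) := by
  have elbo := sum_mul_log_sub_le_log_sum (fun n => b n * π n) q
    (fun n => mul_pos (hb n) (hπ n)) hq hqsum
  have gibbs := sum_mul_log_sub_le_log_sum I q hI hq hqsum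
  rw [hIsum, Real.log_one] at gibbs
  have hlog : ∀ n, Real.log (b n * π n) = Real.log (b n) + Real.log (π n) :=
    fun n => Real.log_mul (hb n).ne' (hπ n).ne'
  simp only [hlog] at elbo
  linarith
end

section
/- Let M, N be positive natural numbers, let b, π, q : Fin M → Fin N → ℝ be such that for every m, b m n > 0 for all n, and π m and q m are probability vectors on Fin N with strictly positive entries, and let I : Fin N → ℝ be a probability vector with strictly positive entries. Then -Real.log (∏ m, ∑ n, b m n * π m n) ≤ ∑ m, (-(∑ n, q m n * Real.log (b m n)) - (∑ n, q m n * Real.log (π m n)) - (∑ n, q m n * Real.log (I n))). (This is Lemma 3.3 of the paper: the negative log-likelihood over all M training instances defined by the mixture model Eq. (6) is upper bounded by the loss function L(Θ, I) of Eq. (7).) -/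
/-!
The log-likelihood is a sum over instances, so it suffices to bound one instance. There every
term `b n * π n` is at most the mixture `∑ k, b k * π k`, and `I n ≤ 1`, so
`log (b n) + log (π n) + log (I n) ≤ log (∑ k, b k * π k)` for each `n`. Averaging against `q`
gives the bound. Jensen's inequality with the entropy of `q` would give a sharper bound, but the
loss contains no entropy term, so this pointwise comparison is enough.
-/

theorem nll_upper_bound (M N : ℕ) (hM : 0 < M) (hN : 0 < N)
    (b π q : Fin M → Fin N → ℝ) (I : Fin N → ℝ)
    (hb : ∀ m n, b m n > 0)
    (hπ : ∀ m n, π m n > 0) (hπsum : ∀ m, ∑ n, π m n = 1)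
    (hq : ∀ m n, q m n > 0) (hqsum : ∀ m, ∑ n, q m n = 1)
    (hI : ∀ n, I n > 0) (hIsum : ∑ n, I n = 1) :
    -Real.log (∏ m, ∑ n, b m n * π m n) ≤
      ∑ m, (-(∑ n, q m n * Real.log (b m n)) - (∑ n, q m n * Real.log (π m n)) -
        (∑ n, q m n * Real.log (I n))) := by
  have hpos : ∀ m n, 0 < b m n * π m n := fun m n => mul_pos (hb m n) (hπ m n)
  have hS : ∀ m, 0 < ∑ n, b m n * π m n := fun m =>
    Finset.sum_pos (fun n _ => hpos m n) ⟨⟨0, hN⟩, Finset.mem_univ _⟩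
  rw [Real.log_prod (fun m _ => (hS m).ne'), ← Finset.sum_neg_distrib]
  refine Finset.sum_le_sum fun m _ => ?_
  have hpt : ∀ n, Real.log (b m n) + Real.log (π m n) + Real.log (I n) ≤
      Real.log (∑ k, b m k * π m k) := fun n => by
    have h1 : Real.log (b m n * π m n) ≤ Real.log (∑ k, b m k * π m k) :=
      Real.log_le_log (hpos m n)
        (Finset.single_le_sum (f := fun k => b m k * π m k)
          (fun k _ => (hpos m k).le) (Finset.mem_univ n))
    rw [Real.log_mul (hb m n).ne' (hπ m n).ne'] at h1
    have hI1 : I n ≤ 1 :=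
      hIsum ▸ Finset.single_le_sum (fun k _ => (hI k).le) (Finset.mem_univ n)
    linarith [Real.log_nonpos (hI n).le hI1]
  have havg : ∑ n, q m n * (Real.log (b m n) + Real.log (π m n) + Real.log (I n)) ≤
      ∑ n, q m n * Real.log (∑ k, b m k * π m k) :=
    Finset.sum_le_sum fun n _ => mul_le_mul_of_nonneg_left (hpt n) (hq m n).le
  rw [← Finset.sum_mul, hqsum m, one_mul] at havg
  simp only [mul_add, Finset.sum_add_distrib] at havg
  linarith
end
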